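/- arXiv:1512.06718 — 3 statements merged into one kernel-verified Lean document; each statement's English description precedes it below -/
import Mathlib

section
/- Let p and q be natural numbers and set n = 4p + 2q + 2. The number of simple graphs on the vertex set Fin n which are trees and in which each of the first p vertices has degree 5, each of the next q vertices has degree 3, and each of the remaining 3p + q + 2 vertices has degree 1, is exactly (4p + 2q)! / (24^p · 2^q). -/
namespace LT

/-- Graft a leaf `none` at `w`. -/
def graft {W : Type} (w : W) (H : SimpleGraph W) : SimpleGraph (Option W) where
  Adj a b := match a, b with
    | none, none => False
    | none, some u => u = w
    | some u, none => u = w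
    | some u, some v => H.Adj u v
  symm := ⟨by
    rintro (_ | a) (_ | b) h
    · exact h
    · exact h
    · exact h
    · exact SimpleGraph.Adj.symm h⟩
  loopless := ⟨by
    rintro (_ | a) h
    · exact h
    · exact H.loopless.irrefl a h⟩

abbrev T (V : Type) (d : V → ℕ) : Type :=
  {G : SimpleGraph V // G.Connected ∧ ∀ v, (G.neighborSet v).ncard = d v}

lemma graft_connected {W : Type} (w : W) (H : SimpleGraph W) :
    (graft w H).Connected ↔ H.Connected := by
  constructor
  · intro h
    have key : ∀ a b, (graft w H).Reachable a b → H.Reachable (a.getD w) (b.getD w) := by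
      rintro a b ⟨p⟩
      induction p with
      | nil => exact SimpleGraph.Reachable.refl _
      | @cons x y z hxy p ih =>
        refine SimpleGraph.Reachable.trans ?_ ih
        rcases x with _ | x <;> rcases y with _ | y
        · exact SimpleGraph.Reachable.refl _
        · have : y = w := hxy
          subst this
          exact SimpleGraph.Reachable.refl _
        · have : x = w := hxy
          subst this
          exact SimpleGraph.Reachable.refl _
        · exact SimpleGraph.Adj.reachable hxy
    have : Nonempty W := ⟨w⟩
    exact ⟨fun a b => key (some a) (some b) (h.preconnected _ _)⟩
  · intro h
    let f : H →g graft w H := ⟨some, fun {a b} hab => hab⟩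
    have h0 : ∀ a, (graft w H).Reachable (some w) a := by
      rintro (_ | a)
      · exact SimpleGraph.Adj.reachable (show w = w from rfl)
      · exact (h.preconnected w a).map f
    exact ⟨fun a b => (h0 a).symm.trans (h0 b)⟩

lemma graft_none {W : Type} (w : W) (H : SimpleGraph W) :
    (graft w H).neighborSet none = {some w} := by
  ext (_ | a)
  · simp [graft]
  · simp [graft]

lemma graft_some {W : Type} [Finite W] [DecidableEq W] (w u : W) (H : SimpleGraph W) :
    ((graft w H).neighborSet (some u)).ncard =
      (H.neighborSet u).ncard + if u = w then 1 else 0 := by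
  split_ifs with h
  · have : (graft w H).neighborSet (some u) = insert none (some '' H.neighborSet u) := by
      ext (_ | a)
      · simp [graft, h]
      · simp [graft]
    rw [this, Set.ncard_insert_of_notMem (by simp) (Set.toFinite _),
      Set.ncard_image_of_injective _ (Option.some_injective _)]
  · have : (graft w H).neighborSet (some u) = (some '' H.neighborSet u) := by
      ext (_ | a)
      · simp [graft, h]
      · simp [graft]
    rw [this, Set.ncard_image_of_injective _ (Option.some_injective _), add_zero]

lemma eq_graft {W : Type} (G : SimpleGraph (Option W)) (h : (G.neighborSet none).ncard = 1) :
    ∃ w, G = graft w (G.comap some) := by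
  obtain ⟨x, hx⟩ := Set.ncard_eq_one.1 h
  have hh : ∀ y, G.Adj none y ↔ y = x := fun y => by
    rw [← SimpleGraph.mem_neighborSet, hx, Set.mem_singleton_iff]
  rcases x with _ | w
  · exact absurd ((hh none).2 rfl) (G.loopless.irrefl _)
  refine ⟨w, ?_⟩
  ext a b
  rcases a with _ | a <;> rcases b with _ | b
  · simp [graft]
  · simp [graft, hh]
  · rw [G.adj_comm]; simp [graft, hh]
  · simp [graft]

lemma step {W : Type} [Fintype W] [DecidableEq W] (d : Option W → ℕ) (hd : d none = 1) :
    Nat.card (T (Option W) d) = ∑ w : W, Nat.card {H : SimpleGraph W // H.Connected ∧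
      ∀ u, (H.neighborSet u).ncard + (if u = w then 1 else 0) = d (some u)} := by
  rw [← Nat.card_sigma]
  symm
  refine Nat.card_congr (Equiv.ofBijective (fun x => ⟨graft x.1 x.2.1,
    (graft_connected _ _).2 x.2.2.1, ?_⟩) ⟨?_, ?_⟩)
  · rintro (_ | u)
    · rw [graft_none, Set.ncard_singleton, hd]
    · rw [graft_some]; exact x.2.2.2 u
  · rintro ⟨w, H, hH⟩ ⟨w', H', hH'⟩ h
    have h1 : graft w H = graft w' H' := congrArg Subtype.val h
    have h2 : w = w' := by
      have h3 : (graft w' H').Adj none (some w) := by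
        rw [← h1]; exact (rfl : w = w)
      exact h3
    subst h2
    have h4 : H = H' := by
      ext a b
      have := congrArg (fun G => G.Adj (some a) (some b)) h1
      exact Iff.of_eq this
    subst h4
    rfl
  · rintro ⟨G, hc, hG⟩
    obtain ⟨w, hw⟩ := eq_graft G ((hG none).trans hd)
    refine ⟨⟨w, G.comap some, ?_, ?_⟩, ?_⟩
    · rw [hw] at hc
      exact (graft_connected _ _).1 hc
    · intro u
      rw [← graft_some, ← hw]; exact hG _
    · exact Subtype.ext hw.symm

lemma transport {V V' : Type} (e : V ≃ V') (d : V → ℕ) :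
    Nat.card (T V d) = Nat.card (T V' (d ∘ e.symm)) := by
  refine Nat.card_congr (Equiv.subtypeEquiv e.simpleGraph ?_)
  intro G
  have f : G ≃g e.simpleGraph G := SimpleGraph.Iso.comap e.symm G |>.symm
  have hn : ∀ v, ((e.simpleGraph G).neighborSet (e v)).ncard = (G.neighborSet v).ncard := by
    intro v
    have : (e.simpleGraph G).neighborSet (e v) = e '' G.neighborSet v := by
      ext x
      obtain ⟨x, rfl⟩ := e.surjective x
      simp [Equiv.simpleGraph]
    rw [this, Set.ncard_image_of_injective _ e.injective]
  refine and_congr f.connected_iff ?_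
  rw [← e.forall_congr_right (q := fun v => ((e.simpleGraph G).neighborSet v).ncard = (d ∘ e.symm) v)]
  refine forall_congr' fun v => ?_
  rw [hn, Function.comp_apply, Equiv.symm_apply_apply]

lemma main (n : ℕ) : ∀ (V : Type) [Fintype V] (d : V → ℕ), Fintype.card V = n + 2 →
    (∀ v, 1 ≤ d v) → ∑ v, d v = 2 * (n + 1) →
    Nat.card (T V d) * ∏ v, (d v - 1).factorial = n.factorial := by
  classical
  induction n with
  | zero =>
    intro V _ d hV h1 hs
    obtain ⟨a, b, hab, hu⟩ := Finset.card_eq_two.1 (show (Finset.univ : Finset V).card = 2 from hV)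
    rw [hu, Finset.sum_pair hab] at hs
    have ha := h1 a
    have hb := h1 b
    have hda : d a = 1 := by omega
    have hdb : d b = 1 := by omega
    have hall : ∀ v, v = a ∨ v = b := fun v => by
      have := Finset.mem_univ v
      rw [hu] at this; simpa using this
    rw [hu, Finset.prod_pair hab, hda, hdb]
    simp only [Nat.sub_self, Nat.factorial_zero, mul_one]
    rw [Nat.card_eq_one_iff_unique]
    have htop : ∀ G : T V d, G.1 = ⊤ := by
      rintro ⟨G, hc, hG⟩
      have : G.Adj a b := by
        obtain ⟨x, hx⟩ := Set.ncard_eq_one.1 ((hG a).trans hda)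
        have hx' : G.Adj a x := by
          rw [← SimpleGraph.mem_neighborSet, hx]; rfl
        rcases hall x with rfl | rfl
        · exact absurd hx' (G.loopless.irrefl _)
        · exact hx'
      ext x y
      rcases hall x with rfl | rfl <;> rcases hall y with rfl | rfl <;>
        simp [this, this.symm, this.ne, this.symm.ne]
    refine ⟨⟨fun x y => Subtype.ext ((htop x).trans (htop y).symm)⟩, ⟨⟨⊤, ?_, ?_⟩⟩⟩
    · have : Nonempty V := ⟨a⟩
      exact SimpleGraph.connected_top
    · intro v
      have hv : d v = 1 := by rcases hall v with rfl | rfl <;> assumption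
      rw [hv, Set.ncard_eq_one]
      rcases hall v with rfl | rfl
      · refine ⟨b, ?_⟩
        ext x
        rcases hall x with rfl | rfl <;> simp [hab, hab.symm]
      · refine ⟨a, ?_⟩
        ext x
        rcases hall x with rfl | rfl <;> simp [hab, hab.symm]
  | succ n ih =>
    intro V _ d hV h1 hs
    obtain ⟨v0, hv0⟩ : ∃ v, d v = 1 := by
      by_contra! hne
      have : ∑ v : V, 2 ≤ ∑ v, d v := Finset.sum_le_sum fun v _ => by
        have := h1 v; have := hne v; omega
      simp [hV] at this
      omega
    set W := {x : V // x ≠ v0}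
    let e : Option W ≃ V := Equiv.optionSubtypeNe v0
    have hW : Fintype.card W = n + 2 := by
      have := Fintype.card_congr e
      rw [Fintype.card_option] at this
      omega
    rw [transport e.symm, ← Equiv.prod_comp e, Fintype.prod_option]
    rw [← Equiv.sum_comp e, Fintype.sum_option] at hs
    have he0 : e none = v0 := Equiv.optionSubtypeNe_none v0
    rw [step _ (by simp [he0, hv0]), he0, hv0]
    rw [he0, hv0] at hs
    simp only [Nat.sub_self, Nat.factorial_zero, one_mul, Equiv.symm_symm, Function.comp_apply]
    set c : W → ℕ := fun u => d (e (some u)) with hc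
    have hc1 : ∀ u, 1 ≤ c u := fun u => h1 _
    change 1 + ∑ u, c u = _ at hs
    change (∑ w : W, Nat.card {H : SimpleGraph W // H.Connected ∧
      ∀ u, (H.neighborSet u).ncard + (if u = w then 1 else 0) = c u}) *
        ∏ u, (c u - 1).factorial = _
    have hterm : ∀ w : W, Nat.card {H : SimpleGraph W // H.Connected ∧
      ∀ u, (H.neighborSet u).ncard + (if u = w then 1 else 0) = c u} *
        ∏ u, (c u - 1).factorial = n.factorial * (c w - 1) := by
      intro w
      by_cases hw : c w = 1
      · rw [hw, Nat.sub_self, mul_zero]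
        have : IsEmpty {H : SimpleGraph W // H.Connected ∧
            ∀ u, (H.neighborSet u).ncard + (if u = w then 1 else 0) = c u} := by
          refine ⟨?_⟩
          rintro ⟨H, hH, hd⟩
          have h0 := hd w
          rw [if_pos rfl, hw] at h0
          have h0' : (H.neighborSet w).ncard = 0 := by omega
          rw [Set.ncard_eq_zero] at h0'
          have : Nontrivial W := Fintype.one_lt_card_iff_nontrivial.1 (by omega)
          obtain ⟨x, hx⟩ := hH.preconnected.exists_adj_of_nontrivial w
          have : x ∈ H.neighborSet w := hx
          rw [h0'] at this
          exact this
        rw [Nat.card_of_isEmpty, zero_mul]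
      · have hw2 : 2 ≤ c w := by have := hc1 w; omega
        let c' : W → ℕ := fun u => c u - if u = w then 1 else 0
        have hcc : ∀ u, c u = c' u + if u = w then 1 else 0 := by
          intro u
          have := hc1 u
          simp only [c']
          split_ifs <;> omega
        have hIH := ih W c' hW (by
          intro u
          have := hc1 u
          simp only [c']
          split_ifs with h
          · subst h; omega
          · omega) (by
          have : ∑ u, c u = ∑ u, c' u + 1 := by
            rw [Finset.sum_congr rfl fun u _ => hcc u, Finset.sum_add_distrib]
            rw [Finset.sum_ite_eq' Finset.univ w (fun _ => 1), if_pos (Finset.mem_univ _)]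
          omega)
        have hset : Nat.card {H : SimpleGraph W // H.Connected ∧
            ∀ u, (H.neighborSet u).ncard + (if u = w then 1 else 0) = c u} =
            Nat.card (T W c') := by
          refine Nat.card_congr (Equiv.subtypeEquivRight fun H => and_congr Iff.rfl
            (forall_congr' fun u => ?_))
          rw [hcc u, Nat.add_right_cancel_iff]
        have hprod : ∏ u, (c u - 1).factorial = (∏ u, (c' u - 1).factorial) * (c w - 1) := by
          rw [← Finset.mul_prod_erase _ _ (Finset.mem_univ w),
            ← Finset.mul_prod_erase _ (fun u => (c' u - 1).factorial) (Finset.mem_univ w)]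
          have h3 : ∏ u ∈ Finset.univ.erase w, (c u - 1).factorial =
              ∏ u ∈ Finset.univ.erase w, (c' u - 1).factorial := by
            refine Finset.prod_congr rfl fun u hu => ?_
            rw [hcc u, if_neg (Finset.ne_of_mem_erase hu), add_zero]
          rw [h3]
          have h4 : (c w - 1).factorial = (c w - 1) * (c' w - 1).factorial := by
            obtain ⟨k, hk⟩ : ∃ k, c w = k + 2 := ⟨c w - 2, by omega⟩
            simp [c', hk, Nat.factorial_succ]
          rw [h4]; ring
        rw [hset, hprod, ← mul_assoc, hIH]
    rw [Finset.sum_mul, Finset.sum_congr rfl fun w _ => hterm w, ← Finset.mul_sum]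
    have h5 : ∑ w, (c w - 1) + (n + 2) = ∑ w, c w := by
      rw [← hW, ← Finset.card_univ, Finset.card_eq_sum_ones, ← Finset.sum_add_distrib]
      exact Finset.sum_congr rfl fun w _ => by have := hc1 w; omega
    have h6 : ∑ w, (c w - 1) = n + 1 := by omega
    rw [h6, Nat.factorial_succ, mul_comm]

lemma tree_iff {V : Type} [Fintype V] (d : V → ℕ) (G : SimpleGraph V)
    (hs : ∑ v, d v + 2 = 2 * Fintype.card V)
    (hG : ∀ v, (G.neighborSet v).ncard = d v) : G.IsTree ↔ G.Connected := by
  classical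
  rw [SimpleGraph.isTree_iff_connected_and_card]
  refine and_iff_left ?_
  have h := G.sum_degrees_eq_twice_card_edges
  have h2 : ∑ v, G.degree v = ∑ v, d v := Finset.sum_congr rfl fun v _ => by
    rw [← hG v, ← SimpleGraph.card_neighborSet_eq_degree, ← Nat.card_eq_fintype_card,
      Nat.card_coe_set_eq]
  rw [Nat.card_eq_fintype_card, Nat.card_eq_fintype_card, ← SimpleGraph.edgeFinset_card]
  omega

/-- Splitting a product over the vertices according to type. -/
lemma sum_split (p q : ℕ) (f : ℕ → ℕ) :
    ∑ v : Fin (4 * p + 2 * q + 2), f (if (v : ℕ) < p then 5 else if (v : ℕ) < p + q then 3 else 1)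
      = p * f 5 + q * f 3 + (3 * p + q + 2) * f 1 := by
  rw [Fin.sum_univ_eq_sum_range (fun v => f (if v < p then 5 else if v < p + q then 3 else 1)),
    show 4 * p + 2 * q + 2 = p + q + (3 * p + q + 2) by ring, Finset.sum_range_add,
    Finset.sum_range_add]
  congr 1
  · congr 1
    · rw [Finset.sum_congr rfl (g := fun _ => f 5) fun x hx => by
        rw [if_pos (Finset.mem_range.1 hx)]]
      simp
    · rw [Finset.sum_congr rfl (g := fun _ => f 3) fun x hx => by
        have := Finset.mem_range.1 hx
        rw [if_neg (by omega), if_pos (by omega)]]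
      simp
  · rw [Finset.sum_congr rfl (g := fun _ => f 1) fun x hx => by
      rw [if_neg (by omega), if_neg (by omega)]]
    simp

lemma prod_split (p q : ℕ) (f : ℕ → ℕ) :
    ∏ v : Fin (4 * p + 2 * q + 2), f (if (v : ℕ) < p then 5 else if (v : ℕ) < p + q then 3 else 1)
      = f 5 ^ p * f 3 ^ q * f 1 ^ (3 * p + q + 2) := by
  rw [Fin.prod_univ_eq_prod_range (fun v => f (if v < p then 5 else if v < p + q then 3 else 1)),
    show 4 * p + 2 * q + 2 = p + q + (3 * p + q + 2) by ring, Finset.prod_range_add,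
    Finset.prod_range_add]
  congr 1
  · congr 1
    · rw [Finset.prod_congr rfl (g := fun _ => f 5) fun x hx => by
        rw [if_pos (Finset.mem_range.1 hx)]]
      simp
    · rw [Finset.prod_congr rfl (g := fun _ => f 3) fun x hx => by
        have := Finset.mem_range.1 hx
        rw [if_neg (by omega), if_pos (by omega)]]
      simp
  · rw [Finset.prod_congr rfl (g := fun _ => f 1) fun x hx => by
      rw [if_neg (by omega), if_neg (by omega)]]
    simp

end LT

/-- The number of labelled trees on `Fin (4p + 2q + 2)` in which each of the
first `p` vertices has degree `5`, each of the next `q` vertices has degree `3`,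
and each of the remaining `3p + q + 2` vertices has degree `1`, is
`(4p + 2q)! / (24^p * 2^q)`. -/
theorem count_labelled_trees (p q : ℕ) :
    Nat.card {G : SimpleGraph (Fin (4 * p + 2 * q + 2)) //
        G.IsTree ∧ ∀ v : Fin (4 * p + 2 * q + 2),
          Nat.card (G.neighborSet v) =
            if (v : ℕ) < p then 5 else if (v : ℕ) < p + q then 3 else 1} =
      Nat.factorial (4 * p + 2 * q) / (24 ^ p * 2 ^ q) := by
  let d : Fin (4 * p + 2 * q + 2) → ℕ := fun v =>
    if (v : ℕ) < p then 5 else if (v : ℕ) < p + q then 3 else 1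
  have hsum : ∑ v, d v = 2 * (4 * p + 2 * q + 1) := by
    have := LT.sum_split p q (fun x => x)
    simp only [d]
    rw [this]; ring
  have hprod : ∏ v, (d v - 1).factorial = 24 ^ p * 2 ^ q := by
    have := LT.prod_split p q (fun x => (x - 1).factorial)
    simp only [d]
    rw [this]; simp [Nat.factorial]
  have hmain := LT.main (4 * p + 2 * q) _ d (by simp)
    (fun v => by simp only [d]; split_ifs <;> omega) hsum
  rw [hprod] at hmain
  have hcard : Nat.card {G : SimpleGraph (Fin (4 * p + 2 * q + 2)) //
        G.IsTree ∧ ∀ v : Fin (4 * p + 2 * q + 2),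
          Nat.card (G.neighborSet v) =
            if (v : ℕ) < p then 5 else if (v : ℕ) < p + q then 3 else 1} =
      Nat.card (LT.T _ d) := by
    refine Nat.card_congr (Equiv.subtypeEquivRight fun G => ?_)
    refine and_congr_left fun h => LT.tree_iff d G ?_ h
    rw [hsum, Fintype.card_fin]; ring
  rw [hcard, ← hmain, Nat.mul_div_cancel _ (by positivity)]
end

section
/- Let μ ≥ 0 be real, let G_c(μ) be the unique real root x > 1 of −3x³ + 4x² − μx + 2μ = 0, set g_c(μ) = (G_c(μ) − 1)/(G_c(μ)²·(G_c(μ)² + μ)) and K(μ) = √( G_c(μ)²·(G_c(μ)² + μ) / (6·G_c(μ)² + μ) ). Then, as n → ∞, the ratio α_n(μ) / ( K(μ)·g_c(μ)^{−n} / (2·√π·n^{3/2}) ) tends to 1; that is, α_n(μ) is asymptotically equivalent to K(μ)·g_c(μ)^{−n}/(2√π·n^{3/2}). -/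
open Filter

/-- `α_n(μ) = ∑_{q=0}^{n} μ^q/(3n − 2q + 1) · C(n,q) · C(4n − 2q, n)`, the
coefficient of `g^n` in the leading-order two-point function `G_LO(g, μ)`. -/
noncomputable def alphaCoeff (μ : ℝ) (n : ℕ) : ℝ :=
  ∑ q ∈ Finset.range (n + 1),
    μ ^ q / (3 * (n : ℝ) - 2 * (q : ℝ) + 1) * (Nat.choose n q : ℝ) *
      (Nat.choose (4 * n - 2 * q) n : ℝ)

lemma orth_int (k : ℤ) :
    ∫ θ in (-Real.pi)..Real.pi, Complex.exp ((k * Complex.I) * (θ : ℂ)) =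
      if k = 0 then 2 * (Real.pi : ℂ) else 0 := by
  split_ifs with h
  · subst h
    simp
    ring
  · have hc : (k * Complex.I : ℂ) ≠ 0 := by
      simp [h]
    rw [integral_exp_mul_complex hc]
    have : Complex.exp (k * Complex.I * (Real.pi : ℂ)) =
        Complex.exp (k * Complex.I * ((-Real.pi : ℝ) : ℂ)) := by
      rw [Complex.exp_eq_exp_iff_exists_int]
      exact ⟨k, by push_cast; ring⟩
    rw [this]
    simp

lemma coef_int (t : ℝ) (m k : ℕ) :
    ∫ θ in (-Real.pi)..Real.pi,
      (1 + (t : ℂ) * Complex.exp (θ * Complex.I)) ^ m * Complex.exp (-(k * (θ * Complex.I))) =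
      2 * (Real.pi : ℂ) * (m.choose k) * (t : ℂ) ^ k := by
  have h : ∀ θ : ℝ, (1 + (t : ℂ) * Complex.exp (θ * Complex.I)) ^ m *
      Complex.exp (-(k * (θ * Complex.I))) =
      ∑ j ∈ Finset.range (m + 1), ((m.choose j : ℂ) * (t : ℂ) ^ j) *
        Complex.exp ((((j : ℤ) - (k : ℤ) : ℤ) * Complex.I) * (θ : ℂ)) := by
    intro θ
    rw [add_comm, add_pow, Finset.sum_mul]
    refine Finset.sum_congr rfl fun j _ => ?_
    rw [mul_pow, ← Complex.exp_nat_mul]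
    have : Complex.exp ((((j : ℤ) - (k : ℤ) : ℤ) * Complex.I) * (θ : ℂ)) =
        Complex.exp (j * (θ * Complex.I)) * Complex.exp (-(k * (θ * Complex.I))) := by
      rw [← Complex.exp_add]
      congr 1
      push_cast
      ring
    rw [this]
    simp
    ring
  simp_rw [h]
  rw [intervalIntegral.integral_finsetSum]
  · simp_rw [intervalIntegral.integral_const_mul, orth_int]
    by_cases hk : k ≤ m
    · rw [Finset.sum_eq_single k]
      · simp
        ring
      · intro j _ hj
        rw [if_neg (by omega)]
        simp
      · intro h
        simp at h
        omega
    · rw [Nat.choose_eq_zero_of_lt (by omega)]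
      rw [Finset.sum_eq_zero]
      · simp
      · intro j hj
        simp at hj
        rw [if_neg (by omega)]
        simp
  · intro j _
    apply Continuous.intervalIntegrable
    fun_prop

lemma choose_id (n q : ℕ) (hq : q ≤ n + 1) :
    (Nat.choose (4 * (n + 1) - 2 * q) (n + 1) : ℝ) / (3 * ((n + 1 : ℕ) : ℝ) - 2 * q + 1) =
      (Nat.choose (4 * (n + 1) - 2 * q) n : ℝ) / ((n + 1 : ℕ) : ℝ) := by
  have h := Nat.choose_succ_right_eq (4 * (n + 1) - 2 * q) n
  have h2 : ((4 * (n + 1) - 2 * q - n : ℕ) : ℝ) = 3 * ((n + 1 : ℕ) : ℝ) - 2 * q + 1 := by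
    obtain ⟨r, hr⟩ : ∃ r, n + 1 = q + r := ⟨n + 1 - q, by omega⟩
    have : (4 * (n + 1) - 2 * q - n : ℕ) = 3 * (n + 1) + 1 - 2 * q := by omega
    rw [this, Nat.cast_sub (by omega)]
    push_cast
    ring
  have h3 : (0 : ℝ) < 3 * ((n + 1 : ℕ) : ℝ) - 2 * q + 1 := by
    rw [← h2]
    exact_mod_cast (by omega : 0 < 4 * (n + 1) - 2 * q - n)
  have h4 : (0 : ℝ) < ((n + 1 : ℕ) : ℝ) := by positivity
  rw [div_eq_div_iff h3.ne' h4.ne', ← h2]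
  exact_mod_cast h

lemma alpha_int (μ t : ℝ) (n : ℕ) :
    ∫ θ in (-Real.pi)..Real.pi,
      ((1 + (t : ℂ) * Complex.exp (θ * Complex.I)) ^ 4 +
        μ * (1 + (t : ℂ) * Complex.exp (θ * Complex.I)) ^ 2) ^ (n + 1) *
        Complex.exp (-(n * (θ * Complex.I))) =
      ((2 * Real.pi * (n + 1 : ℕ) * t ^ n * alphaCoeff μ (n + 1) : ℝ) : ℂ) := by
  have h : ∀ θ : ℝ, ((1 + (t : ℂ) * Complex.exp (θ * Complex.I)) ^ 4 +
        μ * (1 + (t : ℂ) * Complex.exp (θ * Complex.I)) ^ 2) ^ (n + 1) *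
        Complex.exp (-(n * (θ * Complex.I))) =
      ∑ q ∈ Finset.range (n + 1 + 1), ((μ : ℂ) ^ q * ((n + 1).choose q : ℂ)) *
        ((1 + (t : ℂ) * Complex.exp (θ * Complex.I)) ^ (4 * (n + 1) - 2 * q) *
          Complex.exp (-(n * (θ * Complex.I)))) := by
    intro θ
    rw [add_comm (_ ^ 4), add_pow, Finset.sum_mul]
    refine Finset.sum_congr rfl fun q hq => ?_
    have hq' : q ≤ n + 1 := by simp at hq; omega
    have : 4 * (n + 1) - 2 * q = 2 * q + 4 * (n + 1 - q) := by omega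
    rw [this, pow_add, pow_mul, pow_mul, mul_pow]
    ring
  simp_rw [h]
  rw [intervalIntegral.integral_finsetSum]
  · simp_rw [intervalIntegral.integral_const_mul, coef_int]
    rw [alphaCoeff, Finset.mul_sum, Complex.ofReal_sum]
    refine Finset.sum_congr rfl fun q hq => ?_
    have hq' : q ≤ n + 1 := by simp at hq; omega
    have := choose_id n q hq'
    have h4 : ((n + 1 : ℕ) : ℝ) ≠ 0 := by positivity
    have e : 2 * Real.pi * (n + 1 : ℕ) * t ^ n *
        (μ ^ q / (3 * ((n + 1 : ℕ) : ℝ) - 2 * (q : ℝ) + 1) * (Nat.choose (n + 1) q : ℝ) *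
          (Nat.choose (4 * (n + 1) - 2 * q) (n + 1) : ℝ)) =
        μ ^ q * (n + 1).choose q * (2 * Real.pi * (Nat.choose (4 * (n + 1) - 2 * q) n) * t ^ n) := by
      calc _ = 2 * Real.pi * (n + 1 : ℕ) * t ^ n * (μ ^ q * (Nat.choose (n + 1) q : ℝ) *
          ((Nat.choose (4 * (n + 1) - 2 * q) (n + 1) : ℝ) /
            (3 * ((n + 1 : ℕ) : ℝ) - 2 * (q : ℝ) + 1))) := by ring
        _ = _ := by
          rw [this]
          field_simp
    rw [e]
    push_cast
    ring
  · intro j _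
    apply Continuous.intervalIntegrable
    fun_prop

/-- The normalized characteristic function. -/
noncomputable def Fsad (μ x : ℝ) (θ : ℝ) : ℂ :=
  ((1 + ((x - 1 : ℝ) : ℂ) * Complex.exp (θ * Complex.I)) ^ 4 +
    μ * (1 + ((x - 1 : ℝ) : ℂ) * Complex.exp (θ * Complex.I)) ^ 2) *
    Complex.exp (-(θ * Complex.I)) / ((x ^ 2 * (x ^ 2 + μ) : ℝ) : ℂ)

lemma Fsad_cont (μ x : ℝ) : Continuous (Fsad μ x) := by
  unfold Fsad
  fun_prop

lemma alpha_Fsad (μ x : ℝ) (n : ℕ) :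
    ∫ θ in (-Real.pi)..Real.pi, Fsad μ x θ ^ (n + 1) * Complex.exp (θ * Complex.I) =
      ((2 * Real.pi * (n + 1 : ℕ) * (x - 1) ^ n * alphaCoeff μ (n + 1) /
        (x ^ 2 * (x ^ 2 + μ)) ^ (n + 1) : ℝ) : ℂ) := by
  rw [Complex.ofReal_div, ← alpha_int, ← intervalIntegral.integral_div]
  congr 1
  ext θ
  unfold Fsad
  rw [div_pow, mul_pow, ← Complex.exp_nat_mul, div_mul_eq_mul_div, mul_assoc, ← Complex.exp_add]
  push_cast
  congr 3
  ring_nf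

lemma Fsad_bound (μ x : ℝ) (hμ : 0 ≤ μ) (hx : 1 < x) (θ : ℝ) (hθ : |θ| ≤ Real.pi) :
    ‖Fsad μ x θ‖ ≤ Real.exp (-(4 * (x - 1) / (x ^ 2 * Real.pi ^ 2)) * θ ^ 2) := by
  have hcos := Real.cos_le_one_sub_mul_cos_sq hθ
  set u : ℂ := 1 + ((x - 1 : ℝ) : ℂ) * Complex.exp (θ * Complex.I) with hu
  have hn : ‖u‖ ^ 2 = x ^ 2 - 2 * (x - 1) * (1 - Real.cos θ) := by
    rw [← Complex.normSq_eq_norm_sq, Complex.normSq_apply, hu]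
    simp [Complex.exp_ofReal_mul_I_re, Complex.exp_ofReal_mul_I_im]
    have := Real.sin_sq_add_cos_sq θ
    linear_combination (x - 1) ^ 2 * this
  have hx0 : 0 < x ^ 2 := by positivity
  have hc1 : Real.cos θ ≤ 1 := Real.cos_le_one θ
  have hle : ‖u‖ ^ 2 ≤ x ^ 2 := by
    rw [hn]
    nlinarith
  have hD : 0 < x ^ 2 * (x ^ 2 + μ) := by positivity
  have h1 : ‖Fsad μ x θ‖ ≤ ‖u‖ ^ 2 * (‖u‖ ^ 2 + μ) / (x ^ 2 * (x ^ 2 + μ)) := by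
    unfold Fsad
    rw [← hu, norm_div, norm_mul, Complex.norm_real, Real.norm_of_nonneg hD.le]
    have : ‖Complex.exp (-(θ * Complex.I))‖ = 1 := by
      rw [← neg_mul, ← Complex.ofReal_neg, Complex.norm_exp_ofReal_mul_I]
    rw [this, mul_one]
    gcongr
    calc ‖u ^ 4 + μ * u ^ 2‖ ≤ ‖u ^ 4‖ + ‖μ * u ^ 2‖ := norm_add_le _ _
      _ = _ := by
        rw [norm_mul, norm_pow, norm_pow, Complex.norm_real, Real.norm_of_nonneg hμ]
        ring
  have h2 : ‖u‖ ^ 2 * (‖u‖ ^ 2 + μ) / (x ^ 2 * (x ^ 2 + μ)) ≤ ‖u‖ ^ 2 / x ^ 2 := by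
    rw [div_le_div_iff₀ hD hx0]
    have : 0 ≤ ‖u‖ ^ 2 * x ^ 2 := by positivity
    nlinarith
  refine (h1.trans h2).trans ?_
  rw [neg_mul]
  refine le_trans ?_ (Real.one_sub_le_exp_neg _)
  rw [hn, div_le_iff₀ hx0]
  have hpi := Real.pi_pos
  have e : (1 - 4 * (x - 1) / (x ^ 2 * Real.pi ^ 2) * θ ^ 2) * x ^ 2 =
    x ^ 2 - 2 * (x - 1) * (2 / Real.pi ^ 2 * θ ^ 2) := by
    field_simp
    ring
  rw [e]
  have : 2 * (x - 1) * (2 / Real.pi ^ 2 * θ ^ 2) ≤ 2 * (x - 1) * (1 - Real.cos θ) := by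
    apply mul_le_mul_of_nonneg_left _ (by linarith)
    linarith
  linarith

lemma exp_second (a : ℂ) :
    Tendsto (fun n : ℕ => (n : ℂ) * (Complex.exp (a / (Real.sqrt n : ℝ)) - 1
      - a / (Real.sqrt n : ℝ))) atTop (nhds (a ^ 2 / 2)) := by
  rw [tendsto_iff_norm_sub_tendsto_zero]
  have hs : Tendsto (fun n : ℕ => Real.sqrt n) atTop atTop :=
    Real.tendsto_sqrt_atTop.comp tendsto_natCast_atTop_atTop
  have hlim : Tendsto (fun n : ℕ => (‖a‖ ^ 3 * Real.exp ‖a‖) / Real.sqrt n) atTop (nhds 0) :=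
    hs.const_div_atTop _
  refine squeeze_zero' (Eventually.of_forall fun n => norm_nonneg _) ?_ hlim
  filter_upwards [eventually_ge_atTop 1] with n hn
  set s := Real.sqrt n with hsdef
  have hs1 : 1 ≤ s := by
    rw [hsdef]
    exact Real.one_le_sqrt.2 (by exact_mod_cast hn)
  have hs0 : 0 < s := by linarith
  have hsn : (n : ℂ) = (s : ℂ) ^ 2 := by
    rw [← Complex.ofReal_pow, hsdef, Real.sq_sqrt (by positivity)]
    simp
  have hsc : (s : ℂ) ≠ 0 := by exact_mod_cast hs0.ne'
  have hb := Complex.norm_exp_sub_sum_le_norm_mul_exp (a / (s : ℂ)) 3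
  simp only [Finset.sum_range_succ, Finset.sum_range_zero] at hb
  have e : (n : ℂ) * (Complex.exp (a / s) - 1 - a / s) - a ^ 2 / 2 =
      (s : ℂ) ^ 2 * (Complex.exp (a / s) - (0 + (a / s) ^ 0 / (Nat.factorial 0 : ℂ) +
        (a / s) ^ 1 / (Nat.factorial 1 : ℂ) + (a / s) ^ 2 / (Nat.factorial 2 : ℂ))) := by
    rw [hsn]
    simp [Nat.factorial]
    field_simp
    ring
  rw [e, norm_mul, norm_pow, Complex.norm_real, Real.norm_of_nonneg hs0.le]
  have hna : ‖a / (s : ℂ)‖ = ‖a‖ / s := by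
    rw [norm_div, Complex.norm_real, Real.norm_of_nonneg hs0.le]
  rw [hna] at hb
  have hle : ‖a‖ / s ≤ ‖a‖ := div_le_self (norm_nonneg _) hs1
  calc _ ≤ s ^ 2 * ((‖a‖ / s) ^ 3 * Real.exp (‖a‖ / s)) := by gcongr
    _ ≤ s ^ 2 * ((‖a‖ / s) ^ 3 * Real.exp ‖a‖) := by gcongr
    _ = _ := by
      field_simp

lemma Fsad_sum (μ x : ℝ) (hμ : 0 ≤ μ) (hx : 1 < x)
    (hr : -3 * x ^ 3 + 4 * x ^ 2 - μ * x + 2 * μ = 0) (θ : ℝ) :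
    Fsad μ x θ - 1 =
      ((1 + μ) * (Complex.exp (-1 * (θ * Complex.I)) - 1 - (-1 * (θ * Complex.I))) +
       (6 + μ) * (x - 1) ^ 2 * (Complex.exp (1 * (θ * Complex.I)) - 1 - (1 * (θ * Complex.I))) +
       4 * (x - 1) ^ 3 * (Complex.exp (2 * (θ * Complex.I)) - 1 - (2 * (θ * Complex.I))) +
       (x - 1) ^ 4 * (Complex.exp (3 * (θ * Complex.I)) - 1 - (3 * (θ * Complex.I)))) /
       ((x ^ 2 * (x ^ 2 + μ) : ℝ) : ℂ) := by
  have hD : (0 : ℝ) < x ^ 2 * (x ^ 2 + μ) := by positivity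
  have hDc : ((x ^ 2 * (x ^ 2 + μ) : ℝ) : ℂ) ≠ 0 := by exact_mod_cast hD.ne'
  unfold Fsad
  rw [div_sub_one hDc]
  congr 1
  have hrc : (-3 * x ^ 3 + 4 * x ^ 2 - μ * x + 2 * μ : ℂ) = 0 := by exact_mod_cast hr
  have e2 : Complex.exp (2 * (θ * Complex.I)) = Complex.exp (θ * Complex.I) ^ 2 := by
    rw [← Complex.exp_nat_mul]; norm_num
  have e3 : Complex.exp (3 * (θ * Complex.I)) = Complex.exp (θ * Complex.I) ^ 3 := by
    rw [← Complex.exp_nat_mul]; norm_num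
  have e1 : Complex.exp (θ * Complex.I) * Complex.exp (-(θ * Complex.I)) = 1 := by
    rw [← Complex.exp_add]; simp
  rw [e2, e3, neg_one_mul, one_mul]
  push_cast
  set w := Complex.exp (θ * Complex.I)
  set v := Complex.exp (-(θ * Complex.I))
  linear_combination (4 * (x - 1) + 6 * (x - 1) ^ 2 * w + 4 * (x - 1) ^ 3 * w ^ 2 +
    (x - 1) ^ 4 * w ^ 3 + μ * (2 * (x - 1) + (x - 1) ^ 2 * w)) * e1 - x * θ * Complex.I * hrc

lemma Fsad_lim (μ x : ℝ) (hμ : 0 ≤ μ) (hx : 1 < x)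
    (hr : -3 * x ^ 3 + 4 * x ^ 2 - μ * x + 2 * μ = 0) (t : ℝ) :
    Tendsto (fun n : ℕ => Fsad μ x (t / Real.sqrt n) ^ n) atTop
      (nhds ((Real.exp (-((x - 1) ^ 2 * (6 * x ^ 2 + μ) / (x ^ 2 * (x ^ 2 + μ))) * t ^ 2) : ℝ) : ℂ)) := by
  have hD : (0 : ℝ) < x ^ 2 * (x ^ 2 + μ) := by positivity
  have hDc : ((x ^ 2 * (x ^ 2 + μ) : ℝ) : ℂ) ≠ 0 := by exact_mod_cast hD.ne'
  have hrc : (-3 * x ^ 3 + 4 * x ^ 2 - μ * x + 2 * μ : ℂ) = 0 := by exact_mod_cast hr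
  have key : Tendsto (fun n : ℕ => (n : ℂ) * (Fsad μ x (t / Real.sqrt n) - 1)) atTop
      (nhds (((-((x - 1) ^ 2 * (6 * x ^ 2 + μ) / (x ^ 2 * (x ^ 2 + μ))) * t ^ 2 : ℝ) : ℂ))) := by
    have h := ((((exp_second (-1 * (t * Complex.I))).const_mul (1 + μ : ℂ)).add
      ((exp_second (1 * (t * Complex.I))).const_mul ((6 + μ) * (x - 1) ^ 2 : ℂ))).add
      ((exp_second (2 * (t * Complex.I))).const_mul (4 * (x - 1) ^ 3 : ℂ))).add
      ((exp_second (3 * (t * Complex.I))).const_mul ((x - 1) ^ 4 : ℂ))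
    have h' := h.div_const ((x ^ 2 * (x ^ 2 + μ) : ℝ) : ℂ)
    convert h' using 1
    · ext n
      rw [Fsad_sum μ x hμ hx hr]
      have : ((t / Real.sqrt n : ℝ) : ℂ) * Complex.I = t * Complex.I / (Real.sqrt n : ℝ) := by
        push_cast; ring
      rw [this]
      simp only [mul_div_assoc']
      ring
    · congr 1
      push_cast at hDc ⊢
      rw [← neg_div, div_mul_eq_mul_div]
      congr 1
      simp only [mul_pow, Complex.I_sq]
      linear_combination (x * t ^ 2 / 2 : ℂ) * hrc
  have := Complex.tendsto_one_add_pow_exp_of_tendsto key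
  simpa [Complex.ofReal_exp] using this

lemma J_lim (μ x : ℝ) (hμ : 0 ≤ μ) (hx : 1 < x)
    (hr : -3 * x ^ 3 + 4 * x ^ 2 - μ * x + 2 * μ = 0) :
    Tendsto (fun n : ℕ => (Real.sqrt n : ℂ) *
      ∫ θ in (-Real.pi)..Real.pi, Fsad μ x θ ^ n * Complex.exp (θ * Complex.I)) atTop
      (nhds ((Real.sqrt (Real.pi / ((x - 1) ^ 2 * (6 * x ^ 2 + μ) / (x ^ 2 * (x ^ 2 + μ)))) : ℝ) : ℂ)) := by
  have hpi := Real.pi_pos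
  set b := (x - 1) ^ 2 * (6 * x ^ 2 + μ) / (x ^ 2 * (x ^ 2 + μ)) with hb
  set G : ℕ → ℝ → ℂ := fun n => (Set.Ioc (-(Real.pi * Real.sqrt n)) (Real.pi * Real.sqrt n)).indicator
    (fun t => Fsad μ x (t / Real.sqrt n) ^ n *
      Complex.exp (((t / Real.sqrt n : ℝ) : ℂ) * Complex.I)) with hG
  have hlim : Tendsto (fun n => ∫ t, G n t) atTop
      (nhds (∫ t : ℝ, ((Real.exp (-b * t ^ 2) : ℝ) : ℂ))) := by
    refine MeasureTheory.tendsto_integral_of_dominated_convergence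
      (fun t => Real.exp (-(4 * (x - 1) / (x ^ 2 * Real.pi ^ 2)) * t ^ 2)) ?_ ?_ ?_ ?_
    · intro n
      refine MeasureTheory.AEStronglyMeasurable.indicator ?_ measurableSet_Ioc
      apply Continuous.aestronglyMeasurable
      have := Fsad_cont μ x
      fun_prop
    · apply integrable_exp_neg_mul_sq
      have : 0 < x - 1 := by linarith
      positivity
    · intro n
      refine Eventually.of_forall fun t => ?_
      simp only [hG]
      by_cases ht : t ∈ Set.Ioc (-(Real.pi * Real.sqrt n)) (Real.pi * Real.sqrt n)
      · rw [Set.indicator_of_mem ht]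
        have hs : 0 < Real.sqrt n := by
          have := ht.1.trans_le ht.2
          by_contra hc
          nlinarith
        rw [norm_mul, Complex.norm_exp_ofReal_mul_I, mul_one, norm_pow]
        have hth : |t / Real.sqrt n| ≤ Real.pi := by
          rw [abs_div, abs_of_pos hs, div_le_iff₀ hs, abs_le]
          exact ⟨ht.1.le, ht.2⟩
        refine (pow_le_pow_left₀ (norm_nonneg _) (Fsad_bound μ x hμ hx _ hth) n).trans ?_
        rw [← Real.exp_nat_mul, div_pow, Real.sq_sqrt (by positivity)]
        apply le_of_eq
        congr 1
        have : (n : ℝ) ≠ 0 := (Real.sqrt_pos.1 hs).ne'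
        field_simp
      · rw [Set.indicator_of_notMem ht]
        simp
        positivity
    · refine Eventually.of_forall fun t => ?_
      have hs : Tendsto (fun n : ℕ => Real.sqrt n) atTop atTop :=
        Real.tendsto_sqrt_atTop.comp tendsto_natCast_atTop_atTop
      have h1 := Fsad_lim μ x hμ hx hr t
      have h2 : Tendsto (fun n : ℕ => Complex.exp (((t / Real.sqrt n : ℝ) : ℂ) * Complex.I)) atTop
          (nhds 1) := by
        have hc : Continuous (fun r : ℝ => Complex.exp ((r : ℂ) * Complex.I)) := by fun_prop
        have := (hc.tendsto 0).comp (hs.const_div_atTop t)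
        simpa [Function.comp_def] using this
      have h3 := h1.mul h2
      rw [mul_one] at h3
      refine h3.congr' ?_
      filter_upwards [hs.eventually_gt_atTop (|t| / Real.pi)] with n hn
      simp only [hG]
      rw [Set.indicator_of_mem]
      rw [div_lt_iff₀ hpi, abs_lt] at hn
      constructor <;> nlinarith [hn.1, hn.2]
  rw [integral_complex_ofReal, integral_gaussian] at hlim
  refine hlim.congr' ?_
  filter_upwards [eventually_ge_atTop 1] with n hn
  have hs0 : 0 < Real.sqrt n := Real.sqrt_pos.2 (by exact_mod_cast hn)
  simp only [hG]
  rw [MeasureTheory.integral_indicator measurableSet_Ioc, ← intervalIntegral.integral_of_le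
    (by nlinarith), intervalIntegral.integral_comp_div
      (fun θ : ℝ => Fsad μ x θ ^ n * Complex.exp ((θ : ℂ) * Complex.I)) hs0.ne', neg_div,
      mul_div_cancel_right₀ _ hs0.ne']
  simp

/-- Asymptotics of the coefficients: `α_n(μ) ∼ K(μ)·g_c(μ)^{−n}/(2√π·n^{3/2})`
as `n → ∞`. -/
theorem alpha_asymptotics (μ : ℝ) (hμ : 0 ≤ μ) (Gc : ℝ) (hGc1 : 1 < Gc)
    (hGcRoot : -3 * Gc ^ 3 + 4 * Gc ^ 2 - μ * Gc + 2 * μ = 0)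
    (gc : ℝ) (hgc : gc = (Gc - 1) / (Gc ^ 2 * (Gc ^ 2 + μ)))
    (K : ℝ) (hK : K = Real.sqrt (Gc ^ 2 * (Gc ^ 2 + μ) / (6 * Gc ^ 2 + μ))) :
    Tendsto
      (fun n : ℕ =>
        alphaCoeff μ n /
          (K * gc ^ (-(n : ℤ)) / (2 * Real.sqrt Real.pi * (n : ℝ) ^ (3 / 2 : ℝ))))
      atTop (nhds 1) := by
  have hpi := Real.pi_pos
  have hspi : 0 < Real.sqrt Real.pi := Real.sqrt_pos.2 hpi
  have ht : 0 < Gc - 1 := by linarith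
  have hx0 : 0 < Gc := by linarith
  have hD : 0 < Gc ^ 2 * (Gc ^ 2 + μ) := by positivity
  have hK0 : 0 < K := by
    rw [hK]
    positivity
  have hJ := J_lim μ Gc hμ hGc1 hGcRoot
  have hJr := (Complex.continuous_re.tendsto _).comp hJ
  rw [Complex.ofReal_re] at hJr
  have hfin := hJr.const_mul ((Gc - 1) / (Real.sqrt Real.pi * K))
  have hlim1 : (Gc - 1) / (Real.sqrt Real.pi * K) *
      Real.sqrt (Real.pi / ((Gc - 1) ^ 2 * (6 * Gc ^ 2 + μ) / (Gc ^ 2 * (Gc ^ 2 + μ)))) = 1 := by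
    have : Real.pi / ((Gc - 1) ^ 2 * (6 * Gc ^ 2 + μ) / (Gc ^ 2 * (Gc ^ 2 + μ))) =
        Real.pi * (Gc ^ 2 * (Gc ^ 2 + μ) / (6 * Gc ^ 2 + μ)) / (Gc - 1) ^ 2 := by
      field_simp
    rw [this, Real.sqrt_div (by positivity), Real.sqrt_mul hpi.le, ← hK, Real.sqrt_sq ht.le]
    field_simp
  rw [hlim1] at hfin
  refine hfin.congr' ?_
  filter_upwards [eventually_ge_atTop 1] with n hn
  obtain ⟨m, rfl⟩ : ∃ m, n = m + 1 := ⟨n - 1, by omega⟩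
  simp only [Function.comp]
  rw [alpha_Fsad μ Gc m, ← Complex.ofReal_mul, Complex.ofReal_re, zpow_neg, zpow_natCast,
    hgc]
  have hn0 : (0 : ℝ) < ((m + 1 : ℕ) : ℝ) := by positivity
  set N : ℝ := ((m + 1 : ℕ) : ℝ)
  have hp : N ^ (3 / 2 : ℝ) = N * Real.sqrt N := by
    rw [show (3 / 2 : ℝ) = 1 + 1 / 2 by norm_num, Real.rpow_add hn0, Real.rpow_one,
      Real.sqrt_eq_rpow]
  rw [hp, div_pow]
  have hpp : Real.pi = Real.sqrt Real.pi ^ 2 := (Real.sq_sqrt hpi.le).symm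
  set D := Gc ^ 2 * (Gc ^ 2 + μ)
  have hsN : 0 < Real.sqrt N := Real.sqrt_pos.2 hn0
  set p := Real.sqrt Real.pi
  rw [hpp]
  field_simp
  ring
end

section
/- Let μ ≥ 0 be real, let G_c(μ) be the unique real root x > 1 of −3x³ + 4x² − μx + 2μ = 0, set g_c(μ) = (G_c(μ) − 1)/(G_c(μ)²·(G_c(μ)² + μ)) and K(μ) = √( G_c(μ)²·(G_c(μ)² + μ) / (6·G_c(μ)² + μ) ). Let S_μ(g) = ∑_{n=0}^{∞} α_n(μ)·g^n. Then, as g tends to g_c(μ) from the left, the product √(1 − g/g_c(μ)) · S_μ′(g) tends to K(μ)/(2·g_c(μ)), where S_μ′ denotes the derivative of S_μ; in particular S_μ′(g) diverges like (1 − g/g_c(μ))^{−1/2} at the critical point. -/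
open Filter

open Polynomial in
/-- The polynomial `(1+u)^4 + μ (1+u)^2`. -/
noncomputable def lagPhi (μ : ℝ) : ℝ[X] := (1 + X) ^ 4 + C μ * (1 + X) ^ 2

open Polynomial in
/-- Polynomial iterates approximating the solution of `u = g φ(u)`. -/
noncomputable def lagP (μ : ℝ) : ℕ → ℝ[X]
  | 0 => 0
  | N + 1 => X * (lagPhi μ).comp (lagP μ N)

open Polynomial in
theorem lagP_coeff_zero (μ : ℝ) (N : ℕ) : (lagP μ N).coeff 0 = 0 := by
  cases N <;> simp [lagP]

open Polynomial in
theorem lagrange (μ : ℝ) (N : ℕ) : ∀ n : ℕ, n + 1 ≤ N → ∀ H : ℝ[X],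
    (H.comp (lagP μ N)).coeff (n + 1) * ((n : ℝ) + 1) =
      (derivative H * lagPhi μ ^ (n + 1)).coeff n := by
  induction N with
  | zero => intro n hn; omega
  | succ N ih =>
    intro n hn H
    induction H using Polynomial.induction_on' with
    | add p q hp hq => simp [add_mul, hp, hq]
    | monomial k a =>
      rcases k with _ | j
      · simp
      · have e1 : ((monomial (j+1) a).comp (lagP μ (N+1))) =
            C a * (((lagPhi μ)^(j+1)).comp (lagP μ N) * X ^ (j+1)) := by
          rw [monomial_comp, lagP, mul_pow, pow_comp]; ring
        have e2 : derivative (monomial (j+1) a) * lagPhi μ ^ (n + 1) =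
            C (a * ((j:ℝ)+1)) * (lagPhi μ ^ (n+1) * X ^ j) := by
          rw [derivative_monomial, ← C_mul_X_pow_eq_monomial]
          simp only [Nat.add_sub_cancel]; push_cast; ring
        rw [e1, e2, coeff_C_mul, coeff_C_mul, coeff_mul_X_pow', coeff_mul_X_pow']
        by_cases hj : j ≤ n
        · obtain ⟨m, rfl⟩ := Nat.exists_eq_add_of_le hj
          rw [if_pos (by omega), if_pos (by omega)]
          have s1 : j + m + 1 - (j + 1) = m := by omega
          have s2 : j + m - j = m := by omega
          rw [s1, s2]
          rcases m with _ | m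
          · rw [coeff_zero_eq_eval_zero, eval_comp, ← coeff_zero_eq_eval_zero (lagP μ N),
              lagP_coeff_zero, coeff_zero_eq_eval_zero]
            push_cast; ring
          · have h := ih m (by omega) (lagPhi μ ^ (j+1))
            have h2 : (derivative (lagPhi μ ^ (j+(m+1)+1))).coeff m =
              (lagPhi μ ^ (j+(m+1)+1)).coeff (m+1) * ((m:ℝ)+1) := by
              rw [coeff_derivative]
            have h3 : C ((j:ℝ)+m+2) * (derivative (lagPhi μ ^ (j+1)) * lagPhi μ ^ (m+1)) =
               C ((j:ℝ)+1) * derivative (lagPhi μ ^ (j+(m+1)+1)) := by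
              rw [derivative_pow, derivative_pow]
              have : j + (m+1) + 1 - 1 = j + (m+1) := by omega
              rw [this]
              have : j + 1 - 1 = j := by omega
              rw [this]
              simp only [map_add, map_one, map_natCast, Nat.cast_add, Nat.cast_one, map_ofNat]
              ring
            have h4 := congrArg (fun p => coeff p m) h3
            simp only [coeff_C_mul] at h4
            rw [h2, ← h] at h4
            have hm : ((m:ℝ)+1) ≠ 0 := by positivity
            apply mul_right_cancel₀ hm
            push_cast
            linear_combination a * h4
        · rw [if_neg (by omega), if_neg (by omega)]; simp

open Polynomial in
theorem lagP_coeff (μ : ℝ) (N n : ℕ) (hn : n + 1 ≤ N) :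
    (lagP μ N).coeff (n + 1) = alphaCoeff μ (n + 1) := by
  have h := lagrange μ N n hn X
  rw [X_comp, derivative_X, one_mul] at h
  have hn0 : ((n:ℝ)+1) ≠ 0 := by positivity
  apply mul_right_cancel₀ hn0
  rw [h, lagPhi, add_comm, add_pow, finsetSum_coeff, alphaCoeff, Finset.sum_mul]
  apply Finset.sum_congr rfl
  intro q hq
  have hq : q ≤ n + 1 := by simpa [Nat.lt_succ_iff] using hq
  obtain ⟨r, hr⟩ := Nat.exists_eq_add_of_le hq
  have e : (C μ * (1 + X) ^ 2) ^ q * ((1 + X) ^ 4) ^ (n + 1 - q) * ((n+1).choose q : ℝ[X]) =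
     C (μ ^ q * ((n+1).choose q : ℝ)) * (1 + X) ^ (4 * (n+1) - 2 * q) := by
    have : 4 * (n+1) - 2 * q = 2 * q + 4 * (n+1-q) := by omega
    rw [this, map_mul, map_pow, map_natCast, mul_pow, ← pow_mul, ← pow_mul, pow_add]; ring
  rw [e, coeff_C_mul, coeff_one_add_X_pow]
  have hc := Nat.choose_succ_right_eq (4 * (n+1) - 2 * q) n
  have hs : 4 * (n+1) - 2 * q - n = 3 * r + q + 1 := by omega
  rw [hs] at hc
  have hc' : ((4 * (n+1) - 2 * q).choose (n+1) : ℝ) * (n+1) = 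
     ((4 * (n+1) - 2 * q).choose n : ℝ) * (3 * r + q + 1) := by exact_mod_cast hc
  have hr' : (n : ℝ) + 1 = q + r := by exact_mod_cast hr
  have hd : 3 * ((n+1 : ℕ) : ℝ) - 2 * q + 1 = 3 * r + q + 1 := by
    push_cast; linear_combination 3 * hr'
  rw [hd]
  have : (3 * (r:ℝ) + q + 1) ≠ 0 := by positivity
  field_simp
  linear_combination - μ ^ q * ((n+1).choose q : ℝ) * hc'

theorem alphaCoeff_zero (μ : ℝ) : alphaCoeff μ 0 = 1 := by simp [alphaCoeff]

theorem alphaCoeff_nonneg (μ : ℝ) (hμ : 0 ≤ μ) (n : ℕ) : 0 ≤ alphaCoeff μ n := by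
  unfold alphaCoeff
  apply Finset.sum_nonneg
  intro q hq
  have hq : q ≤ n := by simpa [Nat.lt_succ_iff] using hq
  have hq' : (q:ℝ) ≤ n := by exact_mod_cast hq
  have : 0 < 3 * (n:ℝ) - 2 * q + 1 := by
    have : (0:ℝ) ≤ q := by positivity
    linarith
  positivity

open Polynomial in
/-- Coefficientwise nonnegativity. -/
def cNN (p : ℝ[X]) : Prop := ∀ n, 0 ≤ p.coeff n

open Polynomial in
theorem cNN.add {p q : ℝ[X]} (hp : cNN p) (hq : cNN q) : cNN (p + q) := fun n => by
  rw [coeff_add]; exact add_nonneg (hp n) (hq n)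

open Polynomial in
theorem cNN.mul {p q : ℝ[X]} (hp : cNN p) (hq : cNN q) : cNN (p * q) := fun n => by
  rw [coeff_mul]; exact Finset.sum_nonneg fun i _ => mul_nonneg (hp _) (hq _)

open Polynomial in
theorem cNN.pow {p : ℝ[X]} (hp : cNN p) (k : ℕ) : cNN (p ^ k) := by
  induction k with
  | zero => intro n; rw [pow_zero, coeff_one]; split_ifs <;> norm_num
  | succ k ih => rw [pow_succ]; exact ih.mul hp

open Polynomial in
theorem cNN_C {a : ℝ} (ha : 0 ≤ a) : cNN (C a) := fun n => by
  rw [coeff_C]; split_ifs <;> simp [ha]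

open Polynomial in
theorem cNN_X : cNN X := fun n => by
  rw [coeff_X]; split_ifs <;> norm_num

open Polynomial in
theorem lagP_succ (μ : ℝ) (N : ℕ) :
    lagP μ (N+1) = X * ((1 + lagP μ N) ^ 4 + C μ * (1 + lagP μ N) ^ 2) := by
  rw [lagP, lagPhi]; simp

open Polynomial in
theorem lagP_nn (μ : ℝ) (hμ : 0 ≤ μ) (N : ℕ) : cNN (lagP μ N) := by
  have h1 : cNN (1 : ℝ[X]) := by simpa using cNN_C (zero_le_one (α := ℝ))
  induction N with
  | zero => intro n; simp [lagP]
  | succ N ih =>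
    rw [lagP_succ]
    exact cNN_X.mul (((h1.add ih).pow 4).add ((cNN_C hμ).mul ((h1.add ih).pow 2)))

open Polynomial in
theorem lagP_mono (μ : ℝ) (hμ : 0 ≤ μ) (N : ℕ) : cNN (lagP μ (N+1) - lagP μ N) := by
  have h1 : cNN (1 : ℝ[X]) := by simpa using cNN_C (zero_le_one (α := ℝ))
  induction N with
  | zero => simpa [lagP] using lagP_nn μ hμ 1
  | succ N ih =>
    have e : lagP μ (N+1+1) - lagP μ (N+1) = X * ((lagP μ (N+1) - lagP μ N) *
      (((1 + lagP μ (N+1)) + (1 + lagP μ N)) *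
        ((1 + lagP μ (N+1))^2 + (1 + lagP μ N)^2 + C μ))) := by
      rw [lagP_succ μ (N+1)]
      linear_combination -lagP_succ μ N
    rw [e]
    have a := h1.add (lagP_nn μ hμ (N+1))
    have b := h1.add (lagP_nn μ hμ N)
    exact cNN_X.mul (ih.mul ((a.add b).mul (((a.pow 2).add (b.pow 2)).add (cNN_C hμ))))

theorem lagP_coeff_le (μ : ℝ) (hμ : 0 ≤ μ) (N n : ℕ) :
    (lagP μ N).coeff (n+1) ≤ alphaCoeff μ (n+1) := by
  have hm : Monotone fun N => (lagP μ N).coeff (n+1) := monotone_nat_of_le_succ fun N => by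
    have := lagP_mono μ hμ N (n+1)
    rw [Polynomial.coeff_sub] at this; linarith
  rw [← lagP_coeff μ (max N (n+1)) n (le_max_right _ _)]
  exact hm (le_max_left _ _)

theorem lagP_eval_succ (μ g : ℝ) (N : ℕ) : (lagP μ (N+1)).eval g =
    g * ((1 + (lagP μ N).eval g) ^ 4 + μ * (1 + (lagP μ N).eval g) ^ 2) := by
  rw [lagP_succ]; simp

theorem lagP_eval_nonneg (μ : ℝ) (hμ : 0 ≤ μ) (g : ℝ) (hg : 0 ≤ g) (N : ℕ) :
    0 ≤ (lagP μ N).eval g := by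
  induction N with
  | zero => simp [lagP]
  | succ N ih => rw [lagP_eval_succ]; positivity

theorem lagP_eval_le (μ : ℝ) (hμ : 0 ≤ μ) (g c : ℝ) (hg : 0 ≤ g) (hc : 1 ≤ c)
    (h : g * (c ^ 4 + μ * c ^ 2) ≤ c - 1) (N : ℕ) :
    1 + (lagP μ N).eval g ≤ c := by
  induction N with
  | zero => simpa [lagP] using hc
  | succ N ih =>
    rw [lagP_eval_succ]
    have := lagP_eval_nonneg μ hμ g hg N
    have : g * ((1 + (lagP μ N).eval g) ^ 4 + μ * (1 + (lagP μ N).eval g) ^ 2) ≤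
      g * (c ^ 4 + μ * c ^ 2) := by gcongr
    linarith

theorem partial_le (μ : ℝ) (hμ : 0 ≤ μ) (g : ℝ) (hg : 0 ≤ g) (N : ℕ) :
    ∑ n ∈ Finset.range (N+1), alphaCoeff μ n * g ^ n ≤ 1 + (lagP μ N).eval g := by
  have hM : (lagP μ N).natDegree < N + 1 + (lagP μ N).natDegree := by omega
  rw [Polynomial.eval_eq_sum_range' hM, Finset.sum_range_succ']
  have : ∑ k ∈ Finset.range N, alphaCoeff μ (k + 1) * g ^ (k + 1) ≤
      ∑ i ∈ Finset.range (N + 1 + (lagP μ N).natDegree), (lagP μ N).coeff i * g ^ i := by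
    calc _ = ∑ i ∈ Finset.range (N+1), (lagP μ N).coeff i * g ^ i := by
          rw [Finset.sum_range_succ', lagP_coeff_zero]
          simp only [zero_mul, add_zero]
          apply Finset.sum_congr rfl
          intro k hk
          rw [lagP_coeff μ N k (by simpa using hk)]
      _ ≤ _ := by
          apply Finset.sum_le_sum_of_subset_of_nonneg
          · intro i hi; simp at hi ⊢; omega
          · intro i _ _; exact mul_nonneg (lagP_nn μ hμ N i) (pow_nonneg hg i)
  rw [alphaCoeff_zero]; simpa [add_comm] using this

theorem alpha_summable (μ : ℝ) (hμ : 0 ≤ μ) (g c : ℝ) (hg : 0 ≤ g) (hc : 1 ≤ c)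
    (h : g * (c ^ 4 + μ * c ^ 2) ≤ c - 1) :
    Summable fun n => alphaCoeff μ n * g ^ n := by
  apply summable_of_sum_range_le (c := c)
  · intro n; exact mul_nonneg (alphaCoeff_nonneg μ hμ n) (pow_nonneg hg n)
  · intro n
    refine le_trans ?_ ((partial_le μ hμ g hg n).trans (lagP_eval_le μ hμ g c hg hc h n))
    rw [Finset.sum_range_succ]
    have := mul_nonneg (alphaCoeff_nonneg μ hμ n) (pow_nonneg hg n)
    linarith

theorem eval_le_tsum (μ : ℝ) (hμ : 0 ≤ μ) (g : ℝ) (hg : 0 ≤ g)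
    (hs : Summable fun n => alphaCoeff μ n * g ^ n) (N : ℕ) :
    1 + (lagP μ N).eval g ≤ ∑' n, alphaCoeff μ n * g ^ n := by
  have hM : (lagP μ N).natDegree < (lagP μ N).natDegree + 1 := by omega
  refine le_trans ?_ (hs.sum_le_tsum (Finset.range ((lagP μ N).natDegree + 1))
    fun n _ => mul_nonneg (alphaCoeff_nonneg μ hμ n) (pow_nonneg hg n))
  rw [Polynomial.eval_eq_sum_range' hM, Finset.sum_range_succ', Finset.sum_range_succ',
    alphaCoeff_zero, lagP_coeff_zero]
  have : ∑ k ∈ Finset.range (lagP μ N).natDegree, (lagP μ N).coeff (k + 1) * g ^ (k + 1) ≤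
    ∑ k ∈ Finset.range (lagP μ N).natDegree, alphaCoeff μ (k + 1) * g ^ (k + 1) :=
    Finset.sum_le_sum fun k _ => mul_le_mul_of_nonneg_right (lagP_coeff_le μ hμ N k) (by positivity)
  simp; linarith

theorem eval_tendsto (μ : ℝ) (hμ : 0 ≤ μ) (g : ℝ) (hg : 0 ≤ g)
    (hs : Summable fun n => alphaCoeff μ n * g ^ n) :
    Tendsto (fun N => 1 + (lagP μ N).eval g) atTop (nhds (∑' n, alphaCoeff μ n * g ^ n)) :=
  tendsto_of_tendsto_of_tendsto_of_le_of_le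
    ((tendsto_add_atTop_iff_nat 1).2 hs.hasSum.tendsto_sum_nat) tendsto_const_nhds
    (partial_le μ hμ g hg) (eval_le_tsum μ hμ g hg hs)

theorem tsum_props (μ : ℝ) (hμ : 0 ≤ μ) (g c : ℝ) (hg : 0 ≤ g) (hc : 1 ≤ c)
    (h : g * (c ^ 4 + μ * c ^ 2) ≤ c - 1) (S : ℝ) (hS : S = ∑' n, alphaCoeff μ n * g ^ n) :
    1 ≤ S ∧ S ≤ c ∧ S = 1 + g * (S ^ 4 + μ * S ^ 2) := by
  have hs := alpha_summable μ hμ g c hg hc h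
  have ht := eval_tendsto μ hμ g hg hs
  rw [← hS] at ht
  refine ⟨?_, ?_, ?_⟩
  · exact ge_of_tendsto' ht fun N => by linarith [lagP_eval_nonneg μ hμ g hg N]
  · exact le_of_tendsto' ht (lagP_eval_le μ hμ g c hg hc h)
  · have h1 := (tendsto_add_atTop_iff_nat 1).2 ht
    have h2 := (((ht.pow 4).add ((ht.pow 2).const_mul μ)).const_mul g).const_add 1
    refine tendsto_nhds_unique h1 (h2.congr fun N => ?_)
    rw [lagP_eval_succ]

/-- As `g → g_c(μ)⁻`, the product `√(1 − g/g_c(μ)) · S_μ′(g)` tends to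
`K(μ)/(2·g_c(μ))`, where `S_μ(g) = ∑ α_n(μ) g^n`: the derivative of the
leading-order two-point function diverges like `(1 − g/g_c)^{−1/2}`. -/
theorem deriv_GLO_singularity (μ : ℝ) (hμ : 0 ≤ μ) (Gc : ℝ) (hGc1 : 1 < Gc)
    (hGcRoot : -3 * Gc ^ 3 + 4 * Gc ^ 2 - μ * Gc + 2 * μ = 0)
    (gc : ℝ) (hgc : gc = (Gc - 1) / (Gc ^ 2 * (Gc ^ 2 + μ)))
    (K : ℝ) (hK : K = Real.sqrt (Gc ^ 2 * (Gc ^ 2 + μ) / (6 * Gc ^ 2 + μ))) :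
    Tendsto
      (fun g : ℝ =>
        Real.sqrt (1 - g / gc) *
          deriv (fun x : ℝ => ∑' n : ℕ, alphaCoeff μ n * x ^ n) g)
      (nhdsWithin gc (Set.Iio gc)) (nhds (K / (2 * gc))) := by
  set S : ℝ → ℝ := fun x => ∑' n : ℕ, alphaCoeff μ n * x ^ n with hSdef
  have hc0 : 0 < Gc := by linarith
  have hψ : ∀ x : ℝ, 1 ≤ x → 0 < x ^ 4 + μ * x ^ 2 := fun x hx => by
    have : 0 < x := by linarith
    positivity
  have hψc := hψ Gc hGc1.le
  have hgc' : gc = (Gc - 1) / (Gc ^ 4 + μ * Gc ^ 2) := by rw [hgc]; congr 1; ring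
  have hgc0 : 0 < gc := by rw [hgc']; exact div_pos (by linarith) hψc
  have hgcm : gc * (Gc ^ 4 + μ * Gc ^ 2) = Gc - 1 := by rw [hgc']; field_simp
  have hle : ∀ g ∈ Set.Icc 0 gc, g * (Gc ^ 4 + μ * Gc ^ 2) ≤ Gc - 1 := fun g hg => by
    rw [← hgcm]; exact mul_le_mul_of_nonneg_right hg.2 hψc.le
  have hS : ∀ g ∈ Set.Icc 0 gc, 1 ≤ S g ∧ S g ≤ Gc ∧ S g = 1 + g * (S g ^ 4 + μ * S g ^ 2) :=
    fun g hg => tsum_props μ hμ g Gc hg.1 hGc1.le (hle g hg) (S g) rfl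
  have hcont : ContinuousOn S (Set.Icc 0 gc) := by
    refine continuousOn_tsum (u := fun n => alphaCoeff μ n * gc ^ n) (fun n => by fun_prop)
      (alpha_summable μ hμ gc Gc hgc0.le hGc1.le hgcm.le) ?_
    intro n x hx
    have h0 := alphaCoeff_nonneg μ hμ n
    have hx0 := hx.1
    rw [Real.norm_of_nonneg (by positivity)]
    gcongr
    exact hx.2
  have key : ∀ g ∈ Set.Icc 0 gc, 1 - g / gc =
      (Gc - S g) ^ 2 * ((S g ^ 2 + 2 * Gc * S g + 3 * Gc ^ 2 + μ) / (S g ^ 4 + μ * S g ^ 2)) := by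
    intro g hg
    obtain ⟨h1, h2, h3⟩ := hS g hg
    generalize S g = x at *
    have hx := hψ x h1
    have hg' : g = (x - 1) / (x ^ 4 + μ * x ^ 2) := by
      rw [eq_div_iff hx.ne']; linarith
    have hG1 : Gc - 1 ≠ 0 := by linarith
    rw [hg', hgc']
    rw [div_div_div_eq, mul_div_assoc', one_sub_div (by positivity), div_eq_div_iff (by positivity) hx.ne']
    linear_combination (x ^ 4 + μ * x ^ 2) * Gc * (Gc - x) * hGcRoot
  have hSgc : S gc = Gc := by
    have hm : gc ∈ Set.Icc 0 gc := ⟨hgc0.le, le_rfl⟩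
    have k := key gc hm
    have h1 := (hS gc hm).1
    have hx := hψ _ h1
    rw [div_self hgc0.ne', sub_self] at k
    have hpos : 0 < (S gc ^ 2 + 2 * Gc * S gc + 3 * Gc ^ 2 + μ) / (S gc ^ 4 + μ * S gc ^ 2) := by
      have : 0 < S gc := by linarith
      positivity
    have := (mul_eq_zero.1 k.symm).resolve_right hpos.ne'
    have := pow_eq_zero_iff (two_ne_zero) |>.1 this
    linarith
  have hSlim : Tendsto S (nhdsWithin gc (Set.Iio gc)) (nhds Gc) := by
    have h := hcont gc ⟨hgc0.le, le_rfl⟩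
    rw [ContinuousWithinAt, hSgc] at h
    refine h.mono_left ?_
    rw [← nhdsWithin_Ioo_eq_nhdsLT hgc0]
    exact nhdsWithin_mono _ Set.Ioo_subset_Icc_self
  have hq : ∀ x : ℝ, 1 ≤ x →
      0 < 3 * (x ^ 2 + x * Gc + Gc ^ 2) - 4 * (x + Gc) + μ := fun x hx => by
    nlinarith [mul_nonneg (sub_nonneg.2 hx) (sub_nonneg.2 hGc1.le), sq_nonneg (x - 1),
      sq_nonneg (Gc - 1)]
  have hderiv : ∀ g ∈ Set.Ioo 0 gc, deriv S g = (S g ^ 4 + μ * S g ^ 2) ^ 2 /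
      (S g * ((Gc - S g) * (3 * (S g ^ 2 + S g * Gc + Gc ^ 2) - 4 * (S g + Gc) + μ))) ∧
      S g < Gc := by
    intro g hg
    have hg' := Set.Ioo_subset_Icc_self hg
    obtain ⟨h1, h2, h3⟩ := hS g hg'
    have hlt : S g < Gc := by
      refine lt_of_le_of_ne h2 fun h => ?_
      have k := key g hg'
      rw [h, sub_self] at k
      have : g / gc < 1 := (div_lt_one hgc0).2 hg.2
      norm_num at k
      linarith
    refine ⟨?_, hlt⟩
    have hx := hψ _ h1
    have hq' := hq _ h1
    have hx0 : 0 < S g := by linarith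
    have hca : ContinuousAt S g := hcont.continuousAt (Icc_mem_nhds hg.1 hg.2)
    have hd : HasDerivAt (fun x : ℝ => (x - 1) / (x ^ 4 + μ * x ^ 2))
        ((S g * ((Gc - S g) * (3 * (S g ^ 2 + S g * Gc + Gc ^ 2) - 4 * (S g + Gc) + μ))) /
          (S g ^ 4 + μ * S g ^ 2) ^ 2) (S g) := by
      have a : HasDerivAt (fun x : ℝ => x - 1) 1 (S g) := (hasDerivAt_id _).sub_const 1
      have b : HasDerivAt (fun x : ℝ => x ^ 4 + μ * x ^ 2)
          (4 * S g ^ 3 + μ * (2 * S g)) (S g) := by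
        have := (hasDerivAt_pow 4 (S g)).add ((hasDerivAt_pow 2 (S g)).const_mul μ)
        refine this.congr_deriv ?_
        norm_num
      refine (a.div b hx.ne').congr_deriv ?_
      congr 1
      linear_combination S g * hGcRoot
    have hne : (S g * ((Gc - S g) * (3 * (S g ^ 2 + S g * Gc + Gc ^ 2) - 4 * (S g + Gc) + μ))) /
          (S g ^ 4 + μ * S g ^ 2) ^ 2 ≠ 0 := by
      have : 0 < Gc - S g := by linarith
      positivity
    have := HasDerivAt.of_local_left_inverse hca hd hne (by
      filter_upwards [Icc_mem_nhds hg.1 hg.2] with y hy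
      obtain ⟨h1, h2, h3⟩ := hS y hy
      rw [div_eq_iff (hψ _ h1).ne']; linarith)
    rw [this.deriv, inv_div]
  have hF : Tendsto (fun x : ℝ =>
      √((x ^ 2 + 2 * Gc * x + 3 * Gc ^ 2 + μ) / (x ^ 4 + μ * x ^ 2)) *
        ((x ^ 4 + μ * x ^ 2) ^ 2 /
          (x * (3 * (x ^ 2 + x * Gc + Gc ^ 2) - 4 * (x + Gc) + μ)))) (nhds Gc)
      (nhds (√((Gc ^ 2 + 2 * Gc * Gc + 3 * Gc ^ 2 + μ) / (Gc ^ 4 + μ * Gc ^ 2)) *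
        ((Gc ^ 4 + μ * Gc ^ 2) ^ 2 /
          (Gc * (3 * (Gc ^ 2 + Gc * Gc + Gc ^ 2) - 4 * (Gc + Gc) + μ))))) := by
    have hqc := hq Gc hGc1.le
    have : ContinuousAt (fun x : ℝ =>
      √((x ^ 2 + 2 * Gc * x + 3 * Gc ^ 2 + μ) / (x ^ 4 + μ * x ^ 2)) *
        ((x ^ 4 + μ * x ^ 2) ^ 2 /
          (x * (3 * (x ^ 2 + x * Gc + Gc ^ 2) - 4 * (x + Gc) + μ)))) Gc := by
      refine ContinuousAt.mul (ContinuousAt.sqrt (ContinuousAt.div (by fun_prop) (by fun_prop)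
        hψc.ne')) (ContinuousAt.div (by fun_prop) (by fun_prop) (by positivity))
    exact this
  have hval : K / (2 * gc) =
      √((Gc ^ 2 + 2 * Gc * Gc + 3 * Gc ^ 2 + μ) / (Gc ^ 4 + μ * Gc ^ 2)) *
        ((Gc ^ 4 + μ * Gc ^ 2) ^ 2 /
          (Gc * (3 * (Gc ^ 2 + Gc * Gc + Gc ^ 2) - 4 * (Gc + Gc) + μ))) := by
    have e1 : Gc ^ 2 + 2 * Gc * Gc + 3 * Gc ^ 2 + μ = 6 * Gc ^ 2 + μ := by ring
    have e2 : Gc * (3 * (Gc ^ 2 + Gc * Gc + Gc ^ 2) - 4 * (Gc + Gc) + μ) =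
        2 * (Gc - 1) * (6 * Gc ^ 2 + μ) := by linear_combination hGcRoot
    have e3 : Gc ^ 2 * (Gc ^ 2 + μ) = Gc ^ 4 + μ * Gc ^ 2 := by ring
    have hR : 0 < 6 * Gc ^ 2 + μ := by positivity
    have hG1 : 0 < Gc - 1 := by linarith
    rw [hK, hgc', e1, e2, e3]
    generalize Gc ^ 4 + μ * Gc ^ 2 = P at *
    generalize 6 * Gc ^ 2 + μ = R at *
    rw [Real.sqrt_div hψc.le, Real.sqrt_div hR.le]
    have hP := Real.sq_sqrt hψc.le
    have hR2 := Real.sq_sqrt hR.le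
    have hP0 := Real.sqrt_pos.2 hψc
    have hR0 := Real.sqrt_pos.2 hR
    generalize √P = p at *
    generalize √R = r at *
    subst hP hR2
    field_simp
  rw [hval]
  refine (hF.comp hSlim).congr' ?_
  have hmem : Set.Ioo 0 gc ∈ nhdsWithin gc (Set.Iio gc) := Ioo_mem_nhdsLT hgc0
  filter_upwards [hmem] with g hg
  have hg' := Set.Ioo_subset_Icc_self hg
  obtain ⟨hd, hlt⟩ := hderiv g hg
  have h1 := (hS g hg').1
  have hq' := hq _ h1
  have hx0 : 0 < S g := by linarith
  have hG : 0 < Gc - S g := by linarith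
  rw [hd, key g hg', Real.sqrt_mul (by positivity), Real.sqrt_sq hG.le]
  simp only [Function.comp]
  generalize √((S g ^ 2 + 2 * Gc * S g + 3 * Gc ^ 2 + μ) / (S g ^ 4 + μ * S g ^ 2)) = w
  generalize 3 * (S g ^ 2 + S g * Gc + Gc ^ 2) - 4 * (S g + Gc) + μ = q at *
  field_simp
end
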